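/- Let L > 0, ω ∈ ℝ, ρ ∈ ℝ, and define p₀ : ℝ² → ℝ by the double series p₀(x,y) = ρ · Σ_{(j,k) ∈ ℕ×ℕ} (−32ω²/((2j+1)(2k+1)π²)) / ( ((2k+1)π/L)² + ((2j+1)π/L)² ) · sin((2j+1)π(x + L/2)/L) · sin((2k+1)π(y + L/2)/L). Then for every (x,y) in the open square (−L/2, L/2) × (−L/2, L/2), p₀ is twice differentiable at (x,y) and its Laplacian satisfies ∂²p₀/∂x² (x,y) + ∂²p₀/∂y² (x,y) = 2ρω². -/

import Mathlib

open Real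

/-- Initial pressure of the rotating square patch benchmark, as a function on `ℝ × ℝ`,
given by a double odd-sine series. -/
noncomputable def squarePatchPressure (L ω ρ : ℝ) (z : ℝ × ℝ) : ℝ :=
  ρ * ∑' jk : ℕ × ℕ,
    (-32 * ω ^ 2 / ((2 * (jk.1 : ℝ) + 1) * (2 * (jk.2 : ℝ) + 1) * π ^ 2))
      / (((2 * (jk.2 : ℝ) + 1) * π / L) ^ 2 + ((2 * (jk.1 : ℝ) + 1) * π / L) ^ 2)
      * Real.sin ((2 * (jk.1 : ℝ) + 1) * π * (z.1 + L / 2) / L)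
      * Real.sin ((2 * (jk.2 : ℝ) + 1) * π * (z.2 + L / 2) / L)

/-!
Summing over `k` in closed form, as the solution of the two-point boundary value problem
`u'' = (mπ)²u - π³/4`, `u(0) = u(1) = 0`, leaves a single series in `j`. It splits into the Fourier
series of a parabola and the real part of a series holomorphic on the strip `|y| < L / 2`. Real
parts of holomorphic functions are harmonic, so only the term `ρω²x²` contributes to the Laplacian.
-/

open Filter Set Topology InnerProductSpace Laplacian

section TwoPointProblem

variable {a b : ℝ} {q : ℝ → ℝ}

theorem eqOn_zero_of_hasDerivAt_mul_self {u u' : ℝ → ℝ} (hq : ∀ t ∈ Ioo a b, 0 ≤ q t)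
    (hc : ContinuousOn u (Icc a b)) (hu : ∀ t ∈ Ioo a b, HasDerivAt u (u' t) t)
    (hu' : ∀ t ∈ Ioo a b, HasDerivAt u' (q t * u t) t) (ha : u a = 0) (hb : u b = 0) :
    EqOn u 0 (Icc a b) := by
  -- `u ^ 2` is convex because `(u ^ 2)'' = 2 * u' ^ 2 + 2 * q * u ^ 2`.
  have hconv : ConvexOn ℝ (Icc a b) (fun t ↦ u t ^ 2) := by
    refine convexOn_of_hasDerivWithinAt2_nonneg (f' := fun t ↦ 2 * u t * u' t)
      (f'' := fun t ↦ 2 * u' t * u' t + 2 * u t * (q t * u t)) (convex_Icc a b) (hc.pow 2) ?_ ?_ ?_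
    all_goals rw [interior_Icc]; intro t ht
    · exact ((hu t ht).fun_pow 2).hasDerivWithinAt.congr_deriv (by simp)
    · exact (((hu t ht).const_mul 2).mul (hu' t ht)).hasDerivWithinAt
    · nlinarith [sq_nonneg (u' t), mul_nonneg (hq t ht) (sq_nonneg (u t))]
  intro t ht
  have hab : a ≤ b := ht.1.trans ht.2
  have hle := hconv.le_max_of_mem_Icc (left_mem_Icc.2 hab) (right_mem_Icc.2 hab) ht
  simp only [ha, hb, ne_eq, OfNat.ofNat_ne_zero, not_false_eq_true, zero_pow, max_self] at hle
  exact pow_eq_zero_iff two_ne_zero |>.1 (hle.antisymm (sq_nonneg _))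

theorem eqOn_of_hasDerivAt_mul_self_add {f u u' v v' : ℝ → ℝ} (hq : ∀ t ∈ Ioo a b, 0 ≤ q t)
    (huc : ContinuousOn u (Icc a b)) (hu : ∀ t ∈ Ioo a b, HasDerivAt u (u' t) t)
    (hu' : ∀ t ∈ Ioo a b, HasDerivAt u' (q t * u t + f t) t)
    (hvc : ContinuousOn v (Icc a b)) (hv : ∀ t ∈ Ioo a b, HasDerivAt v (v' t) t)
    (hv' : ∀ t ∈ Ioo a b, HasDerivAt v' (q t * v t + f t) t)
    (ha : u a = v a) (hb : u b = v b) : EqOn u v (Icc a b) := by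
  have hzero : EqOn (u - v) 0 (Icc a b) :=
    eqOn_zero_of_hasDerivAt_mul_self hq (huc.sub hvc) (fun t ht ↦ (hu t ht).sub (hv t ht))
      (fun t ht ↦ ((hu' t ht).sub (hv' t ht)).congr_deriv (by simp only [Pi.sub_apply]; ring))
      (sub_eq_zero.2 ha) (sub_eq_zero.2 hb)
  exact fun t ht ↦ sub_eq_zero.1 (hzero ht)

end TwoPointProblem

section TrigonometricSeries

variable {ι : Type*} {a b : ι → ℝ}

theorem hasDerivAt_tsum_mul_sin (hab : Summable fun i ↦ a i * b i) (t : ℝ) :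
    HasDerivAt (fun t ↦ ∑' i, a i * sin (b i * t)) (∑' i, a i * b i * cos (b i * t)) t := by
  refine hasDerivAt_tsum (y₀ := 0) (g := fun i t ↦ a i * sin (b i * t))
    (g' := fun i t ↦ a i * b i * cos (b i * t)) hab.abs (fun i t ↦ ?_) (fun i t ↦ ?_) ?_ t
  · exact (((hasDerivAt_const_mul (b i)).sin).const_mul (a i)).congr_deriv (by ring)
  · rw [norm_mul, Real.norm_eq_abs, Real.norm_eq_abs]
    exact mul_le_of_le_one_right (abs_nonneg _) (abs_cos_le_one _)
  · simp [summable_zero]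

theorem hasDerivAt_tsum_mul_cos (ha : Summable a) (hab : Summable fun i ↦ a i * b i) (t : ℝ) :
    HasDerivAt (fun t ↦ ∑' i, a i * cos (b i * t)) (-∑' i, a i * b i * sin (b i * t)) t := by
  rw [← tsum_neg]
  refine hasDerivAt_tsum (y₀ := 0) (g := fun i t ↦ a i * cos (b i * t))
    (g' := fun i t ↦ -(a i * b i * sin (b i * t))) hab.abs (fun i t ↦ ?_) (fun i t ↦ ?_) ?_ t
  · exact (((hasDerivAt_const_mul (b i)).cos).const_mul (a i)).congr_deriv (by ring)
  · rw [norm_neg, norm_mul, Real.norm_eq_abs, Real.norm_eq_abs]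
    exact mul_le_of_le_one_right (abs_nonneg _) (abs_sin_le_one _)
  · simpa using ha

end TrigonometricSeries

section OddSums

theorem hasSum_odd_of_hasSum_of_hasSum_even {f : ℕ → ℝ} {a b : ℝ} (hf : HasSum f a)
    (heven : HasSum (fun j ↦ f (2 * j)) b) : HasSum (fun j ↦ f (2 * j + 1)) (a - b) := by
  have hinj : Function.Injective fun j ↦ 2 * j + 1 := fun i j hij ↦ by simpa using hij
  have hodd : Summable fun j ↦ f (2 * j + 1) := hf.summable.comp_injective hinj
  have hsum : b + ∑' j, f (2 * j + 1) = a := (heven.even_add_odd hodd.hasSum).unique hf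
  simpa [← hsum] using hodd.hasSum

theorem summable_one_div_odd_pow {k : ℕ} (hk : 1 < k) :
    Summable fun j : ℕ ↦ 1 / (2 * (j : ℝ) + 1) ^ k := by
  have hinj : Function.Injective fun j ↦ 2 * j + 1 := fun i j hij ↦ by simpa using hij
  exact ((summable_one_div_nat_pow.2 hk).comp_injective hinj).congr fun j ↦ by simp

theorem summable_one_div_odd_pow_mul_sq_add_sq (k : ℕ) (m : ℝ) :
    Summable fun j : ℕ ↦ 1 / ((2 * (j : ℝ) + 1) ^ k * ((2 * (j : ℝ) + 1) ^ 2 + m ^ 2)) := by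
  refine (summable_one_div_odd_pow one_lt_two).of_nonneg_of_le (fun j ↦ by positivity) fun j ↦ ?_
  have hpow : 1 ≤ (2 * (j : ℝ) + 1) ^ k := one_le_pow₀ (by linarith [j.cast_nonneg (α := ℝ)])
  gcongr
  nlinarith [sq_nonneg m, sq_nonneg (2 * (j : ℝ) + 1)]

theorem sin_odd_mul_pi (j : ℕ) : sin ((2 * j + 1) * π) = 0 := by
  exact_mod_cast sin_nat_mul_pi (2 * j + 1)

theorem eval_bernoulli_three (x : ℝ) :
    ((Polynomial.bernoulli 3).map (algebraMap ℚ ℝ)).eval x = x ^ 3 - 3 / 2 * x ^ 2 + x / 2 := by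
  have h3 : bernoulli 3 = 0 := bernoulli_eq_zero_of_odd (by decide) (by norm_num)
  simp only [Polynomial.bernoulli, Nat.reduceAdd, Finset.sum_range_succ, Finset.range_one,
    Finset.sum_singleton, tsub_zero, bernoulli_zero, Nat.choose, Nat.cast_one, mul_one,
    Nat.add_one_sub_one, bernoulli_one, add_zero, Nat.cast_ofNat, Nat.reduceSub, bernoulli_two,
    tsub_self, h3, Polynomial.monomial_zero_right, Polynomial.map_add, Polynomial.map_monomial,
    eq_ratCast, Rat.cast_one, Rat.cast_mul, Rat.cast_div, Rat.cast_neg, Rat.cast_ofNat,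
    Rat.cast_inv, Polynomial.eval_add, Polynomial.eval_monomial, one_mul, pow_one]
  ring

theorem hasSum_sin_div_cube {x : ℝ} (hx : x ∈ Icc 0 1) :
    HasSum (fun n : ℕ ↦ sin (2 * π * n * x) / n ^ 3)
      ((2 * π) ^ 3 / 12 * (x ^ 3 - 3 / 2 * x ^ 2 + x / 2)) := by
  have hsum := hasSum_one_div_nat_pow_mul_sin one_ne_zero hx
  norm_num only [eval_bernoulli_three] at hsum
  convert! hsum using 1
  · ext n
    ring
  · ring

theorem hasSum_sin_odd_div_cube {t : ℝ} (ht : t ∈ Icc 0 1) :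
    HasSum (fun j : ℕ ↦ sin ((2 * j + 1) * π * t) / (2 * j + 1) ^ 3)
      (π ^ 3 * t * (1 - t) / 8) := by
  have hall := hasSum_sin_div_cube (x := t / 2) ⟨by linarith [ht.1], by linarith [ht.2]⟩
  have heven : HasSum (fun j : ℕ ↦ sin (2 * π * (2 * j : ℕ) * (t / 2)) / ((2 * j : ℕ) : ℝ) ^ 3)
      (1 / 8 * ((2 * π) ^ 3 / 12 * (t ^ 3 - 3 / 2 * t ^ 2 + t / 2))) := by
    refine ((hasSum_sin_div_cube ht).mul_left (1 / 8)).congr_fun fun j ↦ ?_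
    push_cast
    ring_nf
  convert! hasSum_odd_of_hasSum_of_hasSum_even hall heven using 1
  · ext j
    push_cast
    ring_nf
  · ring

end OddSums

section SineSeries

variable (m : ℝ)

theorem hasDerivAt_tsum_sin_odd_div_cube_mul_sq_add_sq (t : ℝ) :
    HasDerivAt (fun t ↦ ∑' j : ℕ, sin ((2 * j + 1) * π * t) /
        ((2 * j + 1) ^ 3 * ((2 * j + 1) ^ 2 + m ^ 2)))
      (π * ∑' j : ℕ, cos ((2 * j + 1) * π * t) / ((2 * j + 1) ^ 2 * ((2 * j + 1) ^ 2 + m ^ 2)))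
      t := by
  have hab : Summable fun j : ℕ ↦ 1 / ((2 * (j : ℝ) + 1) ^ 3 * ((2 * (j : ℝ) + 1) ^ 2 + m ^ 2)) *
      ((2 * j + 1) * π) :=
    ((summable_one_div_odd_pow_mul_sq_add_sq 2 m).mul_right π).congr fun j ↦ by field_simp
  convert! hasDerivAt_tsum_mul_sin hab t using 1
  · simp only [one_div_mul_eq_div]
  · rw [← tsum_mul_left]
    exact tsum_congr fun j ↦ by field_simp

theorem hasDerivAt_tsum_cos_odd_div_sq_mul_sq_add_sq (t : ℝ) :
    HasDerivAt (fun t ↦ ∑' j : ℕ, cos ((2 * j + 1) * π * t) /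
        ((2 * j + 1) ^ 2 * ((2 * j + 1) ^ 2 + m ^ 2)))
      (-(π * ∑' j : ℕ, sin ((2 * j + 1) * π * t) / ((2 * j + 1) * ((2 * j + 1) ^ 2 + m ^ 2))))
      t := by
  have hab : Summable fun j : ℕ ↦ 1 / ((2 * (j : ℝ) + 1) ^ 2 * ((2 * (j : ℝ) + 1) ^ 2 + m ^ 2)) *
      ((2 * j + 1) * π) :=
    ((summable_one_div_odd_pow_mul_sq_add_sq 1 m).mul_right π).congr fun j ↦ by field_simp
  convert! hasDerivAt_tsum_mul_cos (summable_one_div_odd_pow_mul_sq_add_sq 2 m) hab t using 1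
  · simp only [one_div_mul_eq_div]
  · rw [← tsum_mul_left]
    congr 1
    exact tsum_congr fun j ↦ by field_simp

theorem tsum_sin_odd_div_mul_sq_add_sq_eq_sub {t : ℝ} (ht : t ∈ Icc 0 1) :
    ∑' j : ℕ, sin ((2 * j + 1) * π * t) / ((2 * j + 1) * ((2 * j + 1) ^ 2 + m ^ 2)) =
      π ^ 3 * t * (1 - t) / 8 - m ^ 2 * ∑' j : ℕ, sin ((2 * j + 1) * π * t) /
        ((2 * j + 1) ^ 3 * ((2 * j + 1) ^ 2 + m ^ 2)) := by
  have hsum : Summable fun j : ℕ ↦ sin ((2 * j + 1) * π * t) /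
      ((2 * j + 1) ^ 3 * ((2 * j + 1) ^ 2 + m ^ 2)) := by
    refine .of_norm_bounded (summable_one_div_odd_pow_mul_sq_add_sq 3 m) fun j ↦ ?_
    rw [norm_div, Real.norm_of_nonneg (by positivity : 0 ≤ (2 * (j : ℝ) + 1) ^ 3 * _)]
    gcongr
    exact abs_sin_le_one _
  rw [← tsum_mul_left]
  refine HasSum.tsum_eq (((hasSum_sin_odd_div_cube ht).sub (hsum.mul_left _).hasSum).congr_fun
    fun j ↦ ?_)
  field_simp
  ring

variable {m}

theorem hasDerivAt_one_sub_cosh_div_cosh (hm : m ≠ 0) (t : ℝ) :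
    HasDerivAt (fun t ↦ π / (4 * m ^ 2) * (1 - cosh (m * π * (t - 1 / 2)) / cosh (m * π / 2)))
      (-π ^ 2 / (4 * m) * (sinh (m * π * (t - 1 / 2)) / cosh (m * π / 2))) t := by
  have hlin : HasDerivAt (fun t ↦ m * π * (t - 1 / 2)) (m * π) t := by
    simpa only [mul_one] using ((hasDerivAt_id' t).sub_const (1 / 2)).const_mul (m * π)
  refine (((hlin.cosh.div_const _).const_sub 1).const_mul _).congr_deriv ?_
  field_simp

theorem hasDerivAt_sinh_div_cosh (hm : m ≠ 0) (t : ℝ) :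
    HasDerivAt (fun t ↦ -π ^ 2 / (4 * m) * (sinh (m * π * (t - 1 / 2)) / cosh (m * π / 2)))
      ((m * π) ^ 2 * (π / (4 * m ^ 2) * (1 - cosh (m * π * (t - 1 / 2)) / cosh (m * π / 2))) +
        -(π ^ 3 / 4)) t := by
  have hlin : HasDerivAt (fun t ↦ m * π * (t - 1 / 2)) (m * π) t := by
    simpa only [mul_one] using ((hasDerivAt_id' t).sub_const (1 / 2)).const_mul (m * π)
  refine ((hlin.sinh.div_const _).const_mul _).congr_deriv ?_
  field_simp
  ring

theorem tsum_sin_odd_div_mul_sq_add_sq (hm : m ≠ 0) {t : ℝ} (ht : t ∈ Icc 0 1) :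
    ∑' j : ℕ, sin ((2 * j + 1) * π * t) / ((2 * j + 1) * ((2 * j + 1) ^ 2 + m ^ 2)) =
      π / (4 * m ^ 2) * (1 - cosh (m * π * (t - 1 / 2)) / cosh (m * π / 2)) := by
  have hquad (t : ℝ) :
      HasDerivAt (fun t ↦ π ^ 3 * t * (1 - t) / 8) (π ^ 3 * (1 - 2 * t) / 8) t := by
    refine ((((hasDerivAt_id t).const_mul (π ^ 3)).mul
      ((hasDerivAt_id t).const_sub 1)).div_const 8).congr_deriv ?_
    simp only [id]
    ring
  have hquad' (t : ℝ) : HasDerivAt (fun t ↦ π ^ 3 * (1 - 2 * t) / 8) (-(π ^ 3 / 4)) t :=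
    ((((hasDerivAt_const_mul 2).const_sub 1).const_mul (π ^ 3)).div_const 8).congr_deriv (by ring)
  have hu (t : ℝ) := (hquad t).sub
    ((hasDerivAt_tsum_sin_odd_div_cube_mul_sq_add_sq m t).const_mul (m ^ 2))
  have hu' (t : ℝ) := (hquad' t).sub
    (((hasDerivAt_tsum_cos_odd_div_sq_mul_sq_add_sq m t).const_mul π).const_mul (m ^ 2))
  have hv := hasDerivAt_one_sub_cosh_div_cosh hm
  rw [tsum_sin_odd_div_mul_sq_add_sq_eq_sub m ht]
  refine eqOn_of_hasDerivAt_mul_self_add (q := fun _ ↦ (m * π) ^ 2) (f := fun _ ↦ -(π ^ 3 / 4))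
    (fun _ _ ↦ sq_nonneg _) (fun t _ ↦ (hu t).continuousAt.continuousWithinAt) (fun t _ ↦ hu t)
    (fun t ht ↦ (hu' t).congr_deriv ?_) (fun t _ ↦ (hv t).continuousAt.continuousWithinAt)
    (fun t _ ↦ hv t) (fun t _ ↦ hasDerivAt_sinh_div_cosh hm t) ?_ ?_ ht
  · simp only [Pi.sub_apply, ← tsum_sin_odd_div_mul_sq_add_sq_eq_sub m (Ioo_subset_Icc_self ht)]
    ring
  · simp [show m * π * -2⁻¹ = -(m * π / 2) by ring, (cosh_pos _).ne']
  · simp [sin_odd_mul_pi, show m * π * (1 - 2⁻¹) = m * π / 2 by ring, (cosh_pos _).ne']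

end SineSeries

section StripSeries

/-- The series `∑ sin((2j+1)πw) / ((2j+1)³ cosh((2j+1)π/2))`, holomorphic on the strip
`|im w| < 1 / 2`. Up to a factor, its real part is the non-polynomial part of the double
sine series. -/
noncomputable def oddSineStripSeries (w : ℂ) : ℂ :=
  ∑' j : ℕ, Complex.sin (((2 * j + 1) * π : ℝ) * w) /
    ((2 * j + 1) ^ 3 * cosh ((2 * j + 1) * π / 2) : ℝ)

theorem norm_complex_sin_le_cosh_im (z : ℂ) : ‖Complex.sin z‖ ≤ cosh z.im := by
  rw [Complex.sin, norm_div, norm_mul, Complex.norm_I, mul_one, Complex.norm_two, cosh_eq]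
  gcongr
  exact (norm_sub_le _ _).trans_eq (by simp [Complex.norm_exp])

theorem norm_sin_odd_div_cube_mul_cosh_le (j : ℕ) {w : ℂ} (hw : |w.im| ≤ 1 / 2) :
    ‖Complex.sin (((2 * j + 1) * π : ℝ) * w) / ((2 * j + 1) ^ 3 * cosh ((2 * j + 1) * π / 2) : ℝ)‖
      ≤ 1 / (2 * (j : ℝ) + 1) ^ 3 := by
  have hcosh : cosh ((2 * j + 1) * π * w.im) ≤ cosh ((2 * j + 1) * π / 2) := by
    rw [cosh_le_cosh, div_eq_mul_one_div _ 2, abs_mul, abs_mul _ (1 / 2)]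
    exact mul_le_mul_of_nonneg_left (hw.trans (le_abs_self _)) (abs_nonneg _)
  have hsin := (norm_complex_sin_le_cosh_im (((2 * j + 1) * π : ℝ) * w)).trans
    ((congrArg cosh (Complex.im_ofReal_mul _ _)).trans_le hcosh)
  have := cosh_pos ((2 * (j : ℝ) + 1) * π / 2)
  rw [norm_div, Complex.norm_real, Real.norm_of_nonneg (by positivity),
    div_le_div_iff₀ (by positivity) (by positivity), one_mul, mul_comm]
  gcongr

theorem isOpen_abs_im_lt (r : ℝ) : IsOpen {w : ℂ | |w.im| < r} :=
  isOpen_lt Complex.continuous_im.abs continuous_const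

theorem differentiableOn_oddSineStripSeries :
    DifferentiableOn ℂ oddSineStripSeries {w | |w.im| < 1 / 2} :=
  Complex.differentiableOn_tsum_of_summable_norm (summable_one_div_odd_pow (by norm_num))
    (fun _ ↦ by fun_prop) (isOpen_abs_im_lt _)
    fun j _ hw ↦ norm_sin_odd_div_cube_mul_cosh_le j (le_of_lt hw)

theorem analyticAt_oddSineStripSeries {w : ℂ} (hw : |w.im| < 1 / 2) :
    AnalyticAt ℂ oddSineStripSeries w :=
  differentiableOn_oddSineStripSeries.analyticAt ((isOpen_abs_im_lt _).mem_nhds hw)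

theorem hasSum_re_oddSineStripSeries (s : ℝ) {r : ℝ} (hr : |r| ≤ 1 / 2) :
    HasSum (fun j : ℕ ↦ sin ((2 * j + 1) * π * s) * cosh ((2 * j + 1) * π * r) /
        ((2 * j + 1) ^ 3 * cosh ((2 * j + 1) * π / 2)))
      (oddSineStripSeries (s + r * Complex.I)).re := by
  have hsum := Summable.of_norm_bounded (summable_one_div_odd_pow (by norm_num : 1 < 3)) fun j ↦
    norm_sin_odd_div_cube_mul_cosh_le j (w := s + r * Complex.I) (by simpa using hr)
  refine (Complex.hasSum_re hsum.hasSum).congr_fun fun j ↦ ?_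
  rw [Complex.div_ofReal_re, mul_add, ← mul_assoc, ← Complex.ofReal_mul, ← Complex.ofReal_mul,
    Complex.sin_add_mul_I, ← Complex.ofReal_sin, ← Complex.ofReal_cosh, ← Complex.ofReal_cos,
    ← Complex.ofReal_sinh]
  simp only [← Complex.ofReal_mul, Complex.add_re, Complex.ofReal_re, Complex.re_ofReal_mul,
    Complex.I_re, mul_zero, add_zero]

end StripSeries

section DoubleSeries

theorem summable_sin_odd_mul_sin_odd (s t : ℝ) :
    Summable fun jk : ℕ × ℕ ↦ sin ((2 * jk.1 + 1) * π * s) / (2 * jk.1 + 1) *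
      (sin ((2 * jk.2 + 1) * π * t) /
        ((2 * jk.2 + 1) * ((2 * jk.2 + 1) ^ 2 + (2 * jk.1 + 1) ^ 2))) := by
  have hsq := summable_one_div_odd_pow one_lt_two
  refine .of_norm_bounded (hsq.mul_of_nonneg hsq (fun _ ↦ by positivity) fun _ ↦ by positivity)
    fun ⟨j, k⟩ ↦ ?_
  have hj : 0 < 2 * (j : ℝ) + 1 := by positivity
  have hk : 0 < 2 * (k : ℝ) + 1 := by positivity
  rw [div_mul_div_comm, div_mul_div_comm, one_mul, norm_div, norm_mul,
    Real.norm_of_nonneg (by positivity : 0 ≤ (2 * (j : ℝ) + 1) * _)]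
  refine div_le_div₀ zero_le_one
    (mul_le_one₀ (abs_sin_le_one _) (norm_nonneg _) (abs_sin_le_one _)) (by positivity) ?_
  dsimp only
  nlinarith [mul_pos hj hk, sq_nonneg ((2 * (j : ℝ) + 1) - (2 * k + 1))]

theorem tsum_sin_odd_mul_sin_odd {s t : ℝ} (hs : s ∈ Icc 0 1) (ht : t ∈ Icc 0 1) :
    ∑' jk : ℕ × ℕ, sin ((2 * jk.1 + 1) * π * s) / (2 * jk.1 + 1) *
      (sin ((2 * jk.2 + 1) * π * t) /
        ((2 * jk.2 + 1) * ((2 * jk.2 + 1) ^ 2 + (2 * jk.1 + 1) ^ 2))) =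
      π / 4 * (π ^ 3 * s * (1 - s) / 8 -
        (oddSineStripSeries (s + (t - 1 / 2 : ℝ) * Complex.I)).re) := by
  have ht' : |t - 1 / 2| ≤ 1 / 2 := abs_le.2 ⟨by linarith [ht.1], by linarith [ht.2]⟩
  rw [(summable_sin_odd_mul_sin_odd s t).tsum_prod]
  refine HasSum.tsum_eq ((((hasSum_sin_odd_div_cube hs).sub
    (hasSum_re_oddSineStripSeries s ht')).mul_left (π / 4)).congr_fun fun j ↦ ?_)
  have hj : 2 * (j : ℝ) + 1 ≠ 0 := by positivity
  have := cosh_pos ((2 * (j : ℝ) + 1) * π / 2)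
  dsimp only
  rw [tsum_mul_left, tsum_sin_odd_div_mul_sq_add_sq hj ht]
  field_simp

end DoubleSeries

section Laplacian

theorem laplacian_re_sq (w : ℂ) : Δ (fun w : ℂ ↦ w.re ^ 2) w = 2 := by
  have hfderiv : fderiv ℝ (fun w : ℂ ↦ w.re ^ 2) = fun w ↦ (2 * w.re) • Complex.reCLM := by
    ext1 w
    simpa using (Complex.reCLM.hasFDerivAt (x := w)).pow 2 |>.fderiv
  have hfderiv₂ : fderiv ℝ (fun w : ℂ ↦ (2 * w.re) • Complex.reCLM) w =
      ((2 : ℝ) • Complex.reCLM).smulRight Complex.reCLM :=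
    ((2 : ℝ) • Complex.reCLM |>.hasFDerivAt.smul_const Complex.reCLM).fderiv
  simp [laplacian_eq_iteratedFDeriv_complexPlane, iteratedFDeriv_two_apply, hfderiv, hfderiv₂]

theorem laplacian_mul_re_sq_add_re {f : ℂ → ℂ} {w : ℂ} (c : ℝ) (hf : AnalyticAt ℂ f w) :
    Δ (fun w ↦ c * w.re ^ 2 + (f w).re) w = 2 * c := by
  have hre : ContDiffAt ℝ 2 (fun w : ℂ ↦ w.re ^ 2) w :=
    (Complex.reCLM.contDiff.pow 2).contDiffAt
  have hsmul : ContDiffAt ℝ 2 (c • fun w : ℂ ↦ w.re ^ 2) w := hre.const_smul c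
  calc Δ ((c • fun w : ℂ ↦ w.re ^ 2) + fun w ↦ (f w).re) w
      = Δ (c • fun w : ℂ ↦ w.re ^ 2) w + Δ (fun w ↦ (f w).re) w :=
        hsmul.laplacian_add hf.harmonicAt_re.1
    _ = 2 * c := by
        rw [laplacian_smul c hre, laplacian_re_sq, hf.harmonicAt_re.2.eq_of_nhds]
        simp [mul_comm]

theorem laplacian_comp_equivRealProdCLM {F : Type*} [NormedAddCommGroup F] [NormedSpace ℝ F]
    {p : ℝ × ℝ → F} {w : ℂ} (hp : DifferentiableAt ℝ (fderiv ℝ p) (Complex.equivRealProdCLM w)) :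
    Δ (p ∘ Complex.equivRealProdCLM) w =
      fderiv ℝ (fun z ↦ fderiv ℝ p z (1, 0)) (Complex.equivRealProdCLM w) (1, 0) +
        fderiv ℝ (fun z ↦ fderiv ℝ p z (0, 1)) (Complex.equivRealProdCLM w) (0, 1) := by
  have hcoord (v : ℂ) : iteratedFDeriv ℝ 2 (p ∘ Complex.equivRealProdCLM) w ![v, v] =
      fderiv ℝ (fun z ↦ fderiv ℝ p z (Complex.equivRealProdCLM v)) (Complex.equivRealProdCLM w)
        (Complex.equivRealProdCLM v) := by
    rw [fderiv_clm_apply hp (differentiableAt_const _), ← iteratedFDerivWithin_univ,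
      ← preimage_univ (f := Complex.equivRealProdCLM),
      Complex.equivRealProdCLM.iteratedFDerivWithin_comp_right p uniqueDiffOn_univ (mem_univ _),
      iteratedFDerivWithin_univ]
    simp [iteratedFDeriv_two_apply]
  rw [laplacian_eq_iteratedFDeriv_complexPlane]
  simp only [hcoord]
  simp

end Laplacian

section SquarePatch

theorem squarePatchPressure_eq_tsum {L : ℝ} (hL : L ≠ 0) (ω ρ : ℝ) (z : ℝ × ℝ) :
    squarePatchPressure L ω ρ z = -32 * ρ * ω ^ 2 * L ^ 2 / π ^ 4 *
      ∑' jk : ℕ × ℕ, sin ((2 * jk.1 + 1) * π * (z.1 / L + 1 / 2)) / (2 * jk.1 + 1) *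
        (sin ((2 * jk.2 + 1) * π * (z.2 / L + 1 / 2)) /
          ((2 * jk.2 + 1) * ((2 * jk.2 + 1) ^ 2 + (2 * jk.1 + 1) ^ 2))) := by
  have hphase (n x : ℝ) : n * π * (x + L / 2) / L = n * π * (x / L + 1 / 2) := by field_simp
  rw [squarePatchPressure, ← tsum_mul_left, ← tsum_mul_left]
  refine tsum_congr fun jk ↦ ?_
  rw [hphase, hphase]
  field_simp

/-- The holomorphic function whose real part is the pressure `p₀` of the square patch minus the
particular solution `ρω²x²` of the Poisson equation, in the complex coordinate `x + iy`. -/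
noncomputable def squarePatchHolomorphicPart (L ω ρ : ℝ) (w : ℂ) : ℂ :=
  (8 * ρ * ω ^ 2 * L ^ 2 / π ^ 3 : ℝ) * oddSineStripSeries (w / L + 1 / 2) -
    (ρ * ω ^ 2 * L ^ 2 / 4 : ℝ)

theorem analyticAt_squarePatchHolomorphicPart {L : ℝ} (ω ρ : ℝ) {w : ℂ}
    (hw : |w.im / L| < 1 / 2) :
    AnalyticAt ℂ (squarePatchHolomorphicPart L ω ρ) w := by
  have haffine : AnalyticAt ℂ (fun w : ℂ ↦ w / L + 1 / 2) w := by fun_prop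
  have hstrip : AnalyticAt ℂ oddSineStripSeries (w / L + 1 / 2) :=
    analyticAt_oddSineStripSeries (by simpa [Complex.div_ofReal_im] using hw)
  have hcomp : AnalyticAt ℂ (fun w : ℂ ↦ oddSineStripSeries (w / L + 1 / 2)) w :=
    hstrip.comp_of_eq haffine rfl
  exact (analyticAt_const.mul hcomp).sub analyticAt_const

theorem squarePatchPressure_eq_re {L : ℝ} (hL : L ≠ 0) (ω ρ : ℝ) {w : ℂ}
    (hx : |w.re / L| ≤ 1 / 2) (hy : |w.im / L| ≤ 1 / 2) :
    squarePatchPressure L ω ρ (Complex.equivRealProdCLM w) =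
      ρ * ω ^ 2 * w.re ^ 2 + (squarePatchHolomorphicPart L ω ρ w).re := by
  have hmem {s : ℝ} (hs : |s| ≤ 1 / 2) : s + 1 / 2 ∈ Icc (0 : ℝ) 1 := by
    rw [abs_le] at hs
    constructor <;> linarith
  have hw : w / L + 1 / 2 =
      (w.re / L + 1 / 2 : ℝ) + (w.im / L + 1 / 2 - 1 / 2 : ℝ) * Complex.I := by
    apply Complex.ext <;> simp [Complex.div_ofReal_re, Complex.div_ofReal_im]
  rw [squarePatchPressure_eq_tsum hL, squarePatchHolomorphicPart, hw]
  simp only [Complex.equivRealProdCLM_apply]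
  rw [tsum_sin_odd_mul_sin_odd (hmem hx) (hmem hy), Complex.sub_re,
    Complex.re_ofReal_mul, Complex.ofReal_re]
  field_simp
  ring

theorem squarePatchPressure_comp_eventuallyEq {L : ℝ} (hL : L ≠ 0) (ω ρ : ℝ) {w : ℂ}
    (hx : |w.re / L| < 1 / 2) (hy : |w.im / L| < 1 / 2) :
    squarePatchPressure L ω ρ ∘ Complex.equivRealProdCLM =ᶠ[𝓝 w]
      fun w ↦ ρ * ω ^ 2 * w.re ^ 2 + (squarePatchHolomorphicPart L ω ρ w).re := by
  have hcre : Continuous fun w : ℂ ↦ |w.re / L| := by fun_prop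
  have hcim : Continuous fun w : ℂ ↦ |w.im / L| := by fun_prop
  filter_upwards [hcre.continuousAt.eventually_lt_const hx,
    hcim.continuousAt.eventually_lt_const hy] with w hx hy
  exact squarePatchPressure_eq_re hL ω ρ hx.le hy.le

theorem contDiffAt_squarePatchPressure {L : ℝ} (hL : L ≠ 0) (ω ρ : ℝ) {n : WithTop ℕ∞} {w : ℂ}
    (hx : |w.re / L| < 1 / 2) (hy : |w.im / L| < 1 / 2) :
    ContDiffAt ℝ n (squarePatchPressure L ω ρ) (Complex.equivRealProdCLM w) := by
  rw [← Complex.equivRealProdCLM.contDiffAt_comp_iff, Complex.equivRealProdCLM.symm_apply_apply]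
  have hquad : ContDiffAt ℝ n (fun w : ℂ ↦ ρ * ω ^ 2 * w.re ^ 2) w :=
    contDiffAt_const.mul (Complex.reCLM.contDiff.pow 2).contDiffAt
  have hharm : ContDiffAt ℝ n (fun w ↦ (squarePatchHolomorphicPart L ω ρ w).re) w :=
    (HarmonicAt.analyticAt
      (analyticAt_squarePatchHolomorphicPart ω ρ hy).harmonicAt_re).contDiffAt
  exact (hquad.add hharm).congr_of_eventuallyEq (squarePatchPressure_comp_eventuallyEq hL ω ρ hx hy)

theorem laplacian_squarePatchPressure_comp {L : ℝ} (hL : L ≠ 0) (ω ρ : ℝ) {w : ℂ}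
    (hx : |w.re / L| < 1 / 2) (hy : |w.im / L| < 1 / 2) :
    Δ (squarePatchPressure L ω ρ ∘ Complex.equivRealProdCLM) w = 2 * ρ * ω ^ 2 := by
  rw [(laplacian_congr_nhds (squarePatchPressure_comp_eventuallyEq hL ω ρ hx hy)).eq_of_nhds,
    laplacian_mul_re_sq_add_re _ (analyticAt_squarePatchHolomorphicPart ω ρ hy), mul_assoc]

end SquarePatch

/-- Inside the open square `(-L/2, L/2)²`, the square-patch initial pressure is twice
differentiable and solves the Poisson equation `Δp₀ = 2ρω²`. -/
theorem squarePatchPressure_laplacian (L : ℝ) (hL : 0 < L) (ω ρ : ℝ)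
    (x y : ℝ) (hx₁ : -L / 2 < x) (hx₂ : x < L / 2) (hy₁ : -L / 2 < y) (hy₂ : y < L / 2) :
    DifferentiableAt ℝ (squarePatchPressure L ω ρ) (x, y) ∧
    DifferentiableAt ℝ (fderiv ℝ (squarePatchPressure L ω ρ)) (x, y) ∧
    fderiv ℝ (fun z => fderiv ℝ (squarePatchPressure L ω ρ) z (1, 0)) (x, y) (1, 0)
      + fderiv ℝ (fun z => fderiv ℝ (squarePatchPressure L ω ρ) z (0, 1)) (x, y) (0, 1)
      = 2 * ρ * ω ^ 2 := by
  have habs {a : ℝ} (ha₁ : -L / 2 < a) (ha₂ : a < L / 2) : |a / L| < 1 / 2 := by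
    rw [abs_div, abs_of_pos hL, div_lt_iff₀ hL, abs_lt]
    constructor <;> linarith
  have hx := habs hx₁ hx₂
  have hy := habs hy₁ hy₂
  have hp : ContDiffAt ℝ 2 (squarePatchPressure L ω ρ) (x, y) :=
    contDiffAt_squarePatchPressure (w := ⟨x, y⟩) hL.ne' ω ρ hx hy
  have hp' : DifferentiableAt ℝ (fderiv ℝ (squarePatchPressure L ω ρ)) (x, y) :=
    (hp.fderiv_right (m := 1) le_rfl).differentiableAt one_ne_zero
  exact ⟨hp.differentiableAt two_ne_zero, hp',
    (laplacian_comp_equivRealProdCLM (w := ⟨x, y⟩) hp').symm.trans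
      (laplacian_squarePatchPressure_comp hL.ne' ω ρ hx hy)⟩
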